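/- arXiv:2307.15648 — 2 statements merged into one kernel-verified Lean document; each statement's English description precedes it below -/
import Mathlib

section
/- Let q be an odd prime power, m ≥ 2, and Q a nondegenerate quadratic form of type ε = ±1 on V = F_q^{2m}. Let D = {x ∈ V : x ≠ 0, Q(x) = 0}. Then D is a regular partial difference set in the additive group of V with parameters v = q^{2m}, k = (q^m − ε)(q^{m−1} + ε), λ = q(q^{m−1} − ε)(q^{m−2} + ε) + q − 2, μ = q^{m−1}(q^{m−1} + ε). -/
open Finset

/-- Number of ways to write `x` as `d₁ − d₂` with `d₁, d₂ ∈ D`. -/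
def pdsCountAdd {V : Type*} [AddGroup V] [Fintype V] [DecidableEq V]
    (D : Finset V) (x : V) : ℕ :=
  ((D ×ˢ D).filter (fun p => p.1 - p.2 = x)).card

/-- `D` is a regular `(v,k,λ,μ)`-partial difference set in the additive group `V`. -/
def IsRegularAddPDS {V : Type*} [AddGroup V] [Fintype V] [DecidableEq V]
    (D : Finset V) (v k l m : ℤ) : Prop :=
  (Fintype.card V : ℤ) = v ∧ (D.card : ℤ) = k ∧ (0 : V) ∉ D ∧ (∀ d ∈ D, -d ∈ D) ∧
  (∀ x ∈ D, (pdsCountAdd D x : ℤ) = l) ∧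
  (∀ x : V, x ≠ 0 → x ∉ D → (pdsCountAdd D x : ℤ) = m)

/-- The polar form `β(x,y) = Q(x+y) − Q(x) − Q(y)` of `Q`. -/
def polarQ {F V : Type*} [Field F] [AddCommGroup V] (Q : V → F) (x y : V) : F :=
  Q (x + y) - Q x - Q y

/-- The standard hyperbolic quadratic form `x₁x₂ + x₃x₄ + ⋯ + x_{2m−1}x_{2m}`. -/
def hypForm (F : Type*) [Field F] (m : ℕ) (x : Fin (2 * m) → F) : F :=
  ∑ i : Fin m, x ⟨2 * i.1, by have := i.2; omega⟩ * x ⟨2 * i.1 + 1, by have := i.2; omega⟩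

/-- The standard elliptic quadratic form
`x₁x₂ + ⋯ + x_{2m−3}x_{2m−2} + x_{2m−1}² + b·x_{2m}²`. -/
def ellForm (F : Type*) [Field F] (m : ℕ) (b : F) (x : Fin (2 * m) → F) : F :=
  if h : 1 ≤ m then
    (∑ i : Fin (m - 1),
        x ⟨2 * i.1, by have := i.2; omega⟩ * x ⟨2 * i.1 + 1, by have := i.2; omega⟩)
      + x ⟨2 * m - 2, by omega⟩ ^ 2 + b * x ⟨2 * m - 1, by omega⟩ ^ 2
  else 0

set_option linter.unusedSectionVars false

lemma aux_map_sum {F : Type*} [Field F] (ψ : AddChar F ℂ) {ι : Type*} (s : Finset ι) (f : ι → F) :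
    ψ (∑ i ∈ s, f i) = ∏ i ∈ s, ψ (f i) := by
  classical
  induction s using Finset.induction_on with
  | empty => simp
  | insert a s ha ih => rw [Finset.sum_insert ha, Finset.prod_insert ha, AddChar.map_add_eq_mul, ih]

section Helpers

variable {F : Type*} [Field F] [Fintype F] [DecidableEq F]

lemma aux_sum_F {ψ : AddChar F ℂ} (hψ : ψ.IsPrimitive) (b : F) :
    ∑ x : F, ψ (x * b) = if b = 0 then (Fintype.card F : ℂ) else 0 := by
  have := AddChar.sum_mulShift b hψ
  rw [this]; split_ifs <;> simp

/-- hyperbolic plane sum -/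
lemma aux_hyp_plane {ψ : AddChar F ℂ} (hψ : ψ.IsPrimitive) (t : F) (ht : t ≠ 0) :
    ∑ p : F × F, ψ (t * (p.1 * p.2)) = (Fintype.card F : ℂ) := by
  rw [Fintype.sum_prod_type_right]
  have : ∀ y : F, ∑ x : F, ψ (t * (x * y)) = if y = 0 then (Fintype.card F : ℂ) else 0 := by
    intro y
    have h := aux_sum_F hψ (t * y)
    simp only [mul_eq_zero, ht, false_or] at h
    rw [← h]
    exact Finset.sum_congr rfl fun x _ => by congr 1; ring
  simp only [this]
  simp

lemma aux_sq_sum {ψ : AddChar F ℂ} (hψ : ψ.IsPrimitive) (hF : ringChar F ≠ 2) (t : F)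
    (ht : t ≠ 0) :
    ∑ x : F, ψ (t * x ^ 2) =
      (quadraticChar F t : ℂ) * gaussSum ((quadraticChar F).ringHomComp (Int.castRingHom ℂ)) ψ := by
  have h1 : ∑ x : F, ψ (t * x ^ 2) = ∑ c : F, ((quadraticChar F c : ℂ) + 1) * ψ (t * c) := by
    rw [← Finset.sum_fiberwise_of_maps_to (s := Finset.univ) (t := Finset.univ)
      (g := fun x : F => x ^ 2) (fun _ _ => Finset.mem_univ _)]
    refine Finset.sum_congr rfl fun c _ => ?_
    have h2 : ∑ i ∈ Finset.univ.filter (fun x : F => x ^ 2 = c), ψ (t * i ^ 2)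
        = ∑ i ∈ Finset.univ.filter (fun x : F => x ^ 2 = c), ψ (t * c) := by
      refine Finset.sum_congr rfl fun x hx => ?_
      rw [(Finset.mem_filter.1 hx).2]
    rw [h2, Finset.sum_const, nsmul_eq_mul]
    congr 1
    have h3 := quadraticChar_card_sqrts hF c
    have h4 : ({x : F | x ^ 2 = c} : Set F).toFinset
        = Finset.univ.filter (fun x : F => x ^ 2 = c) := by
      ext; simp
    rw [h4] at h3
    exact_mod_cast h3
  have h5 : ∑ c : F, ψ (t * c) = 0 := by
    have h := aux_sum_F hψ t
    rw [if_neg ht] at h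
    rw [← h]
    exact Finset.sum_congr rfl fun x _ => by congr 1; ring
  have h6 := gaussSum_mulShift ((quadraticChar F).ringHomComp (Int.castRingHom ℂ)) ψ (Units.mk0 t ht)
  rw [h1]
  simp only [add_mul, one_mul, Finset.sum_add_distrib, h5, add_zero]
  rw [← h6]
  have h7 : (quadraticChar F t : ℂ) * (quadraticChar F t : ℂ) = 1 := by
    have := quadraticChar_sq_one ht
    rw [← pow_two]; exact_mod_cast this
  simp only [Units.val_mk0, MulChar.ringHomComp_apply, gaussSum, AddChar.mulShift_apply,
    eq_intCast]
  rw [← mul_assoc, h7, one_mul]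

lemma aux_ell_plane {ψ : AddChar F ℂ} (hψ : ψ.IsPrimitive) (hF : ringChar F ≠ 2) (b : F)
    (hb : ¬ ∃ c : F, -b = c ^ 2) (t : F) (ht : t ≠ 0) :
    ∑ p : F × F, ψ (t * (p.1 ^ 2 + b * p.2 ^ 2)) = - (Fintype.card F : ℂ) := by
  have hb0 : b ≠ 0 := by
    rintro rfl; exact hb ⟨0, by simp⟩
  have h1 : ∑ p : F × F, ψ (t * (p.1 ^ 2 + b * p.2 ^ 2))
      = (∑ x : F, ψ (t * x ^ 2)) * ∑ y : F, ψ ((t * b) * y ^ 2) := by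
    rw [Fintype.sum_prod_type, Finset.sum_mul_sum]
    refine Finset.sum_congr rfl fun x _ => Finset.sum_congr rfl fun y _ => ?_
    rw [← AddChar.map_add_eq_mul]; congr 1; ring
  rw [h1, aux_sq_sum hψ hF t ht, aux_sq_sum hψ hF _ (mul_ne_zero ht hb0)]
  set χ := (quadraticChar F).ringHomComp (Int.castRingHom ℂ) with hχ
  have hχ1 : χ ≠ 1 := by
    rw [hχ]
    exact (MulChar.ringHomComp_ne_one_iff (RingHom.injective_int _)).2 (quadraticChar_ne_one hF)
  have hsq := gaussSum_sq hχ1 ((quadraticChar_isQuadratic F).comp (Int.castRingHom ℂ)) hψ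
  have h7 : (quadraticChar F t : ℂ) * (quadraticChar F t : ℂ) = 1 := by
    have := quadraticChar_sq_one ht
    rw [← pow_two]; exact_mod_cast this
  have h8 : quadraticChar F (-b) = -1 := by
    rw [quadraticChar_neg_one_iff_not_isSquare]
    rintro ⟨c, hc⟩
    exact hb ⟨c, by rw [hc]; ring⟩
  have h9 : (quadraticChar F (-1) : ℂ) * (quadraticChar F b : ℂ) = -1 := by
    have : quadraticChar F (-1) * quadraticChar F b = -1 := by
      rw [← map_mul, ← h8]; congr 1; ring
    exact_mod_cast this
  have h10 : χ (-1) = (quadraticChar F (-1) : ℂ) := by simp [hχ]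
  rw [h10] at hsq
  rw [map_mul]
  push_cast
  linear_combination (quadraticChar F t : ℂ) * (quadraticChar F t : ℂ) * (quadraticChar F b : ℂ) * hsq
    + (Fintype.card F : ℂ) * (quadraticChar F (-1) : ℂ) * (quadraticChar F b : ℂ) * h7
    + (Fintype.card F : ℂ) * h9

/-- pairing up coordinates -/
def pairEquiv (F : Type*) (m : ℕ) : (Fin (2 * m) → F) ≃ (Fin m → F × F) where
  toFun x i := (x ⟨2 * i.1, by have := i.2; omega⟩, x ⟨2 * i.1 + 1, by have := i.2; omega⟩)
  invFun y j := if j.1 % 2 = 0 then (y ⟨j.1 / 2, by have := j.2; omega⟩).1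
    else (y ⟨j.1 / 2, by have := j.2; omega⟩).2
  left_inv x := by
    funext j
    by_cases h : j.1 % 2 = 0
    · simp only [h, if_true]; congr 1; ext; simp only []; omega
    · simp only [h, if_false]; congr 1; ext; simp only []; omega
  right_inv y := by
    funext i
    have h1 : (2 * i.1) / 2 = i.1 := by omega
    have h2 : (2 * i.1 + 1) / 2 = i.1 := by omega
    have h3 : (2 * i.1 + 1) % 2 = 1 := by omega
    simp [h2, h3]

lemma aux_prod (m : ℕ) (h : Fin m → F × F → ℂ) :
    ∑ x : Fin (2 * m) → F, ∏ i, h i (pairEquiv F m x i) = ∏ i, ∑ p : F × F, h i p := by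
  rw [Finset.prod_univ_sum, Fintype.piFinset_univ]
  exact Fintype.sum_equiv (pairEquiv F m) _ _ fun x => rfl

lemma aux_hyp {ψ : AddChar F ℂ} (hψ : ψ.IsPrimitive) (m : ℕ) (t : F) (ht : t ≠ 0) :
    ∑ x : Fin (2 * m) → F, ψ (t * hypForm F m x) = (Fintype.card F : ℂ) ^ m := by
  have h := aux_prod m (fun _ p => ψ (t * (p.1 * p.2)))
  simp only [aux_hyp_plane hψ t ht, Finset.prod_const, Finset.card_univ, Fintype.card_fin] at h
  rw [← h]
  refine Finset.sum_congr rfl fun x _ => ?_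
  rw [hypForm, Finset.mul_sum, aux_map_sum]
  rfl

lemma aux_ell {ψ : AddChar F ℂ} (hψ : ψ.IsPrimitive) (hF : ringChar F ≠ 2) (b : F)
    (hb : ¬ ∃ c : F, -b = c ^ 2) (m : ℕ) (t : F) (ht : t ≠ 0) :
    ∑ x : Fin (2 * (m + 1)) → F, ψ (t * ellForm F (m + 1) b x)
      = - (Fintype.card F : ℂ) ^ (m + 1) := by
  have h := aux_prod (m + 1) (fun i p => if i = Fin.last m then ψ (t * (p.1 ^ 2 + b * p.2 ^ 2))
    else ψ (t * (p.1 * p.2)))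
  rw [Fin.prod_univ_castSucc] at h
  simp only [Fin.castSucc_ne_last, if_false, if_true, aux_hyp_plane hψ t ht,
    aux_ell_plane hψ hF b hb t ht, Finset.prod_const, Finset.card_univ, Fintype.card_fin] at h
  have h2 : - (Fintype.card F : ℂ) ^ (m + 1) = (Fintype.card F : ℂ) ^ m * -(Fintype.card F : ℂ) := by
    ring
  rw [h2, ← h]
  refine Finset.sum_congr rfl fun x _ => ?_
  rw [Fin.prod_univ_castSucc]
  simp only [Fin.castSucc_ne_last, if_false, if_true]
  rw [← aux_map_sum, ← AddChar.map_add_eq_mul, ← Finset.mul_sum, ← mul_add]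
  congr 2
  simp only [ellForm, pairEquiv]
  rw [dif_pos (by omega), add_assoc]
  rfl

end Helpers

section Count

variable {F : Type*} [Field F] [Fintype F] [DecidableEq F]
variable {V : Type*} [AddCommGroup V] [Module F V] [Fintype V] [DecidableEq V]

lemma aux_count0 {ψ : AddChar F ℂ} (hψ : ψ.IsPrimitive) (Q : V → F) (g : ℂ)
    (hg : ∀ t : F, t ≠ 0 → ∑ y, ψ (t * Q y) = g) :
    (Fintype.card F : ℂ) * ((Finset.univ.filter (fun y => Q y = 0)).card : ℂ)
      = (Fintype.card V : ℂ) + ((Fintype.card F : ℂ) - 1) * g := by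
  have h1 : ∑ t : F, ∑ y, ψ (t * Q y) = (Fintype.card V : ℂ) + ((Fintype.card F : ℂ) - 1) * g := by
    rw [← Finset.add_sum_erase _ _ (Finset.mem_univ (0 : F))]
    congr 1
    · simp
    · rw [Finset.sum_congr rfl (fun t ht => hg t (Finset.ne_of_mem_erase ht)), Finset.sum_const,
        Finset.card_erase_of_mem (Finset.mem_univ _), Finset.card_univ, nsmul_eq_mul,
        Nat.cast_sub Fintype.card_pos]
      simp
  rw [← h1, Finset.sum_comm]
  simp only [aux_sum_F hψ]
  rw [← Finset.sum_filter, Finset.sum_const, nsmul_eq_mul, mul_comm]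

lemma polarQ_comm' (Q : V → F) (x y : V) : polarQ Q x y = polarQ Q y x := by
  simp only [polarQ, add_comm x y]; ring

lemma aux_nd {ψ : AddChar F ℂ} (hψ : ψ.IsPrimitive) (Q : V → F)
    (hadd : ∀ x x' y : V, polarQ Q (x + x') y = polarQ Q x y + polarQ Q x' y)
    (hsmul : ∀ (a : F) (x y : V), polarQ Q (a • x) y = a * polarQ Q x y)
    (hnd : ∀ x : V, (∀ y, polarQ Q x y = 0) → x = 0) (x : V) (hx : x ≠ 0) (s : F) (hs : s ≠ 0) :
    ∑ y, ψ (s * polarQ Q x y) = 0 := by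
  let f : V →+ F := AddMonoidHom.mk' (fun y => polarQ Q x y) (fun a b => by
    rw [polarQ_comm', hadd, polarQ_comm' Q a, polarQ_comm' Q b])
  have hne : (ψ.mulShift s).compAddMonoidHom f ≠ 1 := by
    intro h
    obtain ⟨y0, hy0⟩ : ∃ y, polarQ Q x y ≠ 0 := by
      by_contra hcon
      push Not at hcon
      exact hx (hnd x hcon)
    obtain ⟨z, hz⟩ := AddChar.ne_one_iff.1 (hψ hs)
    apply hz
    have := DFunLike.congr_fun h ((z / polarQ Q x y0) • y0)
    simp only [AddChar.compAddMonoidHom_apply, AddChar.one_apply, f, AddMonoidHom.mk'_apply] at this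
    rw [polarQ_comm', hsmul, polarQ_comm' Q y0, div_mul_cancel₀ _ hy0] at this
    exact this
  exact AddChar.sum_eq_zero_of_ne_one hne

lemma aux_shift {ψ : AddChar F ℂ} (Q : V → F) (g : ℂ)
    (hg : ∀ t : F, t ≠ 0 → ∑ y, ψ (t * Q y) = g)
    (hQhom : ∀ (a : F) (x : V), Q (a • x) = a ^ 2 * Q x)
    (hsmul : ∀ (a : F) (x y : V), polarQ Q (a • x) y = a * polarQ Q x y)
    (x : V) (c s t : F) (ht : t ≠ 0) :
    ∑ y, ψ (t * Q y + s * (polarQ Q x y - c)) = g * ψ (-s * c - s ^ 2 * t⁻¹ * Q x) := by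
  rw [← hg t ht, Finset.sum_mul]
  refine Fintype.sum_equiv (Equiv.addLeft ((s * t⁻¹) • x)) _ _ fun y => ?_
  rw [← AddChar.map_add_eq_mul]
  congr 1
  have h1 := hsmul (s * t⁻¹) x y
  have h2 : Q ((s * t⁻¹) • x + y) = (s * t⁻¹) ^ 2 * Q x + Q y + (s * t⁻¹) * polarQ Q x y := by
    rw [← h1, ← hQhom]; simp only [polarQ]; ring
  simp only [Equiv.coe_addLeft, h2]
  field_simp
  ring

lemma aux_count2 {ψ : AddChar F ℂ} (hψ : ψ.IsPrimitive) (Q : V → F) (g : ℂ)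
    (hg : ∀ t : F, t ≠ 0 → ∑ y, ψ (t * Q y) = g)
    (hQhom : ∀ (a : F) (x : V), Q (a • x) = a ^ 2 * Q x)
    (hadd : ∀ x x' y : V, polarQ Q (x + x') y = polarQ Q x y + polarQ Q x' y)
    (hsmul : ∀ (a : F) (x y : V), polarQ Q (a • x) y = a * polarQ Q x y)
    (hnd : ∀ x : V, (∀ y, polarQ Q x y = 0) → x = 0) (x : V) (hx : x ≠ 0) (c : F) :
    (Fintype.card F : ℂ) ^ 2 *
      ((Finset.univ.filter (fun y => Q y = 0 ∧ polarQ Q x y = c)).card : ℂ)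
      = (Fintype.card V : ℂ) +
        g * ∑ t ∈ Finset.univ.erase (0 : F), ∑ s : F, ψ (-s * c - s ^ 2 * t⁻¹ * Q x) := by
  have h0 : ∑ s : F, ∑ y, ψ (0 * Q y + s * (polarQ Q x y - c)) = (Fintype.card V : ℂ) := by
    rw [← Finset.add_sum_erase _ _ (Finset.mem_univ (0 : F))]
    rw [Finset.sum_eq_zero (s := Finset.univ.erase (0 : F)), add_zero]
    · simp
    · intro s hs
      have h1 := aux_nd hψ Q hadd hsmul hnd x hx s (Finset.ne_of_mem_erase hs)
      have h2 : ∀ y, ψ (0 * Q y + s * (polarQ Q x y - c))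
          = ψ (s * polarQ Q x y) * ψ (-s * c) := by
        intro y; rw [← AddChar.map_add_eq_mul]; congr 1; ring
      simp only [h2]
      rw [← Finset.sum_mul, h1, zero_mul]
  have h3 : ∑ t : F, ∑ s : F, ∑ y, ψ (t * Q y + s * (polarQ Q x y - c))
      = (Fintype.card V : ℂ) +
        g * ∑ t ∈ Finset.univ.erase (0 : F), ∑ s : F, ψ (-s * c - s ^ 2 * t⁻¹ * Q x) := by
    rw [← Finset.add_sum_erase _ _ (Finset.mem_univ (0 : F)), h0, Finset.mul_sum]
    congr 1
    refine Finset.sum_congr rfl fun t ht => ?_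
    rw [Finset.mul_sum]
    exact Finset.sum_congr rfl fun s _ =>
      aux_shift Q g hg hQhom hsmul x c s t (Finset.ne_of_mem_erase ht)
  rw [← h3]
  have h4 : ∀ t : F, ∑ s : F, ∑ y, ψ (t * Q y + s * (polarQ Q x y - c))
      = ∑ y, ψ (t * Q y) * ∑ s : F, ψ (s * (polarQ Q x y - c)) := by
    intro t
    rw [Finset.sum_comm]
    refine Finset.sum_congr rfl fun y _ => ?_
    rw [Finset.mul_sum]
    exact Finset.sum_congr rfl fun s _ => AddChar.map_add_eq_mul _ _ _
  simp only [h4]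
  rw [Finset.sum_comm]
  simp only [← Finset.sum_mul, aux_sum_F hψ]
  have h5 : ∀ y, ((if Q y = 0 then (Fintype.card F : ℂ) else 0) *
      if polarQ Q x y - c = 0 then (Fintype.card F : ℂ) else 0)
      = if Q y = 0 ∧ polarQ Q x y = c then (Fintype.card F : ℂ) ^ 2 else 0 := by
    intro y
    by_cases h : Q y = 0 <;> by_cases h' : polarQ Q x y = c <;> simp [h, h', sub_eq_zero, pow_two]
  simp only [h5]
  rw [← Finset.sum_filter, Finset.sum_const, nsmul_eq_mul, mul_comm]

lemma aux_E0 (ψ : AddChar F ℂ) :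
    ∑ t ∈ Finset.univ.erase (0 : F), ∑ s : F, ψ (-s * 0 - s ^ 2 * t⁻¹ * 0)
      = ((Fintype.card F : ℂ) - 1) * (Fintype.card F : ℂ) := by
  simp [Finset.card_erase_of_mem, Nat.cast_sub (Fintype.card_pos (α := F))]

lemma aux_E1 {ψ : AddChar F ℂ} (hψ : ψ.IsPrimitive) (a : F) (ha : a ≠ 0) :
    ∑ t ∈ Finset.univ.erase (0 : F), ∑ s : F, ψ (-s * (-a) - s ^ 2 * t⁻¹ * a)
      = (Fintype.card F : ℂ) := by
  have h1 : ∑ t ∈ Finset.univ.erase (0 : F), ∑ s : F, ψ (-s * (-a) - s ^ 2 * t⁻¹ * a)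
      = ∑ t ∈ Finset.univ.erase (0 : F), ∑ s : F, ψ (s * a) * ψ (t * (-(s ^ 2 * a))) := by
    refine Finset.sum_nbij' (fun t => t⁻¹) (fun t => t⁻¹) ?_ ?_ ?_ ?_ ?_
    · intro t ht; simpa using ht
    · intro t ht; simpa using ht
    · intro t ht; simp
    · intro t ht; simp
    · intro t ht
      refine Finset.sum_congr rfl fun s _ => ?_
      rw [← AddChar.map_add_eq_mul]; congr 1; ring
  have h2 : ∀ s : F, ∑ t ∈ Finset.univ.erase (0 : F), ψ (t * (-(s ^ 2 * a)))
      = (if s = 0 then (Fintype.card F : ℂ) else 0) - 1 := by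
    intro s
    have h := aux_sum_F hψ (-(s ^ 2 * a))
    rw [← Finset.add_sum_erase _ _ (Finset.mem_univ (0 : F))] at h
    simp only [zero_mul, AddChar.map_zero_eq_one, neg_eq_zero, mul_eq_zero, ha, or_false,
      pow_eq_zero_iff (two_ne_zero)] at h
    rw [← h]; ring
  rw [h1, Finset.sum_comm]
  simp only [← Finset.mul_sum, h2, mul_sub, Finset.sum_sub_distrib, mul_one, aux_sum_F hψ, ha,
    if_false]
  simp

lemma aux_pds (D : Finset V) (x : V) :
    pdsCountAdd D x = (Finset.univ.filter (fun y => y ∈ D ∧ x + y ∈ D)).card := by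
  unfold pdsCountAdd
  refine Finset.card_nbij' (fun p => p.2) (fun y => (x + y, y)) ?_ ?_ ?_ ?_
  · rintro ⟨a, b⟩ h
    simp only [Finset.coe_filter, Finset.mem_product, Set.mem_ofPred_eq] at h
    obtain ⟨⟨h1, h2⟩, rfl⟩ := h
    simp [h1, h2]
  · intro y h
    simpa [and_comm] using h
  · rintro ⟨a, b⟩ h
    simp only [Finset.coe_filter, Finset.mem_product, Set.mem_ofPred_eq] at h
    obtain ⟨⟨h1, h2⟩, rfl⟩ := h
    simp
  · intro y h
    rfl

end Count

/-- the nonzero singular vectors of a nondegenerate quadratic form of type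
`ε = ±1` on `F_q^{2m}` form a regular PDS with the parameters of `VO^ε(2m,q)`. -/
theorem stmt6 {F : Type*} [Field F] [Fintype F] [DecidableEq F] (q m : ℕ)
    (hq : Fintype.card F = q) (hodd : Odd q) (hm : 2 ≤ m) (ε : ℤ) (hε : ε = 1 ∨ ε = -1)
    (Q : (Fin (2 * m) → F) → F)
    (hQhom : ∀ (a : F) (x : Fin (2 * m) → F), Q (a • x) = a ^ 2 * Q x)
    (hadd : ∀ x x' y : Fin (2 * m) → F, polarQ Q (x + x') y = polarQ Q x y + polarQ Q x' y)
    (hsmul : ∀ (a : F) (x y : Fin (2 * m) → F), polarQ Q (a • x) y = a * polarQ Q x y)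
    (hnd : ∀ x : Fin (2 * m) → F, (∀ y, polarQ Q x y = 0) → x = 0)
    (htype :
      (ε = 1 ∧ ∃ e : (Fin (2 * m) → F) ≃ₗ[F] (Fin (2 * m) → F),
          ∀ x, Q (e x) = hypForm F m x) ∨
      (ε = -1 ∧ ∃ b : F, (¬ ∃ c : F, -b = c ^ 2) ∧
          ∃ e : (Fin (2 * m) → F) ≃ₗ[F] (Fin (2 * m) → F), ∀ x, Q (e x) = ellForm F m b x)) :
    IsRegularAddPDS (Finset.univ.filter (fun x : Fin (2 * m) → F => x ≠ 0 ∧ Q x = 0))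
      ((q : ℤ) ^ (2 * m))
      (((q : ℤ) ^ m - ε) * ((q : ℤ) ^ (m - 1) + ε))
      ((q : ℤ) * ((q : ℤ) ^ (m - 1) - ε) * ((q : ℤ) ^ (m - 2) + ε) + (q : ℤ) - 2)
      ((q : ℤ) ^ (m - 1) * ((q : ℤ) ^ (m - 1) + ε)) := by
  subst hq
  have hF : ringChar F ≠ 2 := by
    intro h
    have := FiniteField.even_card_of_char_two h
    have h' := Nat.odd_iff.1 hodd
    omega
  obtain ⟨n, rfl⟩ : ∃ n, m = n + 2 := ⟨m - 2, by omega⟩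
  obtain ⟨ψ, hψ⟩ : ∃ ψ : AddChar F ℂ, ψ.IsPrimitive :=
    ⟨_, AddChar.FiniteField.primitiveChar_to_Complex_isPrimitive F⟩
  have hg : ∀ t : F, t ≠ 0 →
      ∑ y, ψ (t * Q y) = (ε : ℂ) * (Fintype.card F : ℂ) ^ (n + 2) := by
    intro t ht
    rcases htype with ⟨rfl, e, he⟩ | ⟨rfl, b, hb, e, he⟩
    · rw [← e.toEquiv.sum_comp]
      simp only [LinearEquiv.coe_toEquiv, he, aux_hyp hψ _ t ht]
      simp
    · rw [← e.toEquiv.sum_comp]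
      simp only [LinearEquiv.coe_toEquiv, he, aux_ell hψ hF b hb (n + 1) t ht]
      simp
  have hcard : Fintype.card (Fin (2 * (n + 2)) → F) = Fintype.card F ^ (2 * (n + 2)) := by simp
  have hεε : ε * ε = 1 := by rcases hε with rfl | rfl <;> norm_num
  have hQ0 : Q 0 = 0 := by simpa using hQhom 0 0
  have hQneg : ∀ x, Q (-x) = Q x := fun x => by simpa using hQhom (-1) x
  have hq0 : (Fintype.card F : ℤ) ≠ 0 := by exact_mod_cast Fintype.card_ne_zero
  have hexp : ∀ x y, Q (x + y) = Q x + Q y + polarQ Q x y := fun x y => by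
    simp only [polarQ]; ring
  have hpn : ∀ x, polarQ Q x (-x) = -(Q x + Q x) := fun x => by
    simp only [polarQ, add_neg_cancel, hQ0, hQneg]; ring
  have hp0 : ∀ x, polarQ Q x 0 = 0 := fun x => by
    simp [polarQ, hQ0]
  refine ⟨by rw [hcard]; push_cast; rfl, ?_, by simp, ?_, ?_, ?_⟩
  · have h1 := aux_count0 hψ Q _ hg
    rw [hcard] at h1
    have h2 : (Finset.univ.filter (fun x => x ≠ 0 ∧ Q x = 0))
        = (Finset.univ.filter (fun x => Q x = 0)).erase 0 := by
      ext x; simp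
    have h3 := Finset.card_erase_add_one (s := Finset.univ.filter (fun x => Q x = 0)) (a := 0)
      (by simp [hQ0])
    rw [← h2] at h3
    rw [← h3] at h1
    norm_cast at h1
    push_cast at h1
    apply mul_left_cancel₀ hq0
    have e1 : n + 2 - 1 = n + 1 := rfl
    rw [e1]
    simp only [Int.subNatNat_eq_coe] at h1
    push_cast at h1
    linear_combination h1 + (Fintype.card F : ℤ) * hεε
  · intro d hd
    simpa [hQneg] using hd
  · intro x hx
    obtain ⟨hx0, hQx⟩ : x ≠ 0 ∧ Q x = 0 := by simpa using hx
    have h1 := aux_count2 hψ Q _ hg hQhom hadd hsmul hnd x hx0 0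
    rw [hQx, aux_E0 ψ, hcard] at h1
    rw [aux_pds]
    have h2 : (Finset.univ.filter (fun y =>
          y ∈ Finset.univ.filter (fun x => x ≠ 0 ∧ Q x = 0) ∧
          x + y ∈ Finset.univ.filter (fun x => x ≠ 0 ∧ Q x = 0)))
        = ((Finset.univ.filter (fun y => Q y = 0 ∧ polarQ Q x y = 0)).erase 0).erase (-x) := by
      ext y
      have h : x + y = 0 ↔ y = -x := by rw [add_comm x y, add_eq_zero_iff_eq_neg]
      simp only [Finset.mem_filter, Finset.mem_univ, true_and, Finset.mem_erase, hexp, hQx, h, ne_eq]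
      constructor
      · rintro ⟨⟨a, b⟩, c, d⟩
        rw [b] at d
        exact ⟨c, a, b, by simpa using d⟩
      · rintro ⟨c, a, b, d⟩
        exact ⟨⟨a, b⟩, c, by simp [b, d]⟩
    have h3 := Finset.card_erase_add_one
      (s := Finset.univ.filter (fun y => Q y = 0 ∧ polarQ Q x y = 0)) (a := 0)
      (by simp [hQ0, hp0])
    have h4 := Finset.card_erase_add_one
      (s := (Finset.univ.filter (fun y => Q y = 0 ∧ polarQ Q x y = 0)).erase 0) (a := -x)
      (by simp [hx0, hQneg, hpn, hQx])
    rw [← h2] at h4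
    rw [← h3, ← h4] at h1
    norm_cast at h1
    simp only [Int.subNatNat_eq_coe] at h1
    push_cast at h1
    apply mul_left_cancel₀ (pow_ne_zero 2 hq0)
    have e1 : n + 2 - 1 = n + 1 := rfl
    have e2 : n + 2 - 2 = n := rfl
    rw [e1, e2]
    linear_combination h1 + (Fintype.card F : ℤ) ^ 3 * hεε
  · intro x hx0 hxD
    have hQx : Q x ≠ 0 := by
      intro h; exact hxD (by simp [hx0, h])
    have h1 := aux_count2 hψ Q _ hg hQhom hadd hsmul hnd x hx0 (-Q x)
    rw [aux_E1 hψ _ hQx, hcard] at h1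
    rw [aux_pds]
    have h2 : (Finset.univ.filter (fun y =>
          y ∈ Finset.univ.filter (fun x => x ≠ 0 ∧ Q x = 0) ∧
          x + y ∈ Finset.univ.filter (fun x => x ≠ 0 ∧ Q x = 0)))
        = Finset.univ.filter (fun y => Q y = 0 ∧ polarQ Q x y = -Q x) := by
      ext y
      have h : x + y = 0 ↔ y = -x := by rw [add_comm x y, add_eq_zero_iff_eq_neg]
      simp only [Finset.mem_filter, Finset.mem_univ, true_and, hexp, h, ne_eq]
      constructor
      · rintro ⟨⟨a, b⟩, c, d⟩
        exact ⟨b, by linear_combination d - b⟩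
      · rintro ⟨b, d⟩
        refine ⟨⟨?_, b⟩, ?_, by linear_combination d + b⟩
        · rintro rfl
          rw [hp0] at d
          exact hQx (by linear_combination d)
        · rintro rfl
          rw [hQneg] at b
          exact hQx b
    rw [h2]
    norm_cast at h1
    push_cast at h1
    apply mul_left_cancel₀ (pow_ne_zero 2 hq0)
    have e1 : n + 2 - 1 = n + 1 := rfl
    rw [e1]
    linear_combination h1
end

section
/- Let p be an odd prime and Ĝ = ⟨x, y : x^{p²} = y^{p²} = 1, yxy⁻¹ = x^{p²−p+1}⟩. Fix 1 ≤ i ≤ p−1 and define P̂ᵢ = (⋃_{j=0}^{p−1} (⟨xy^{j+pi}⟩ ∖ ⟨x^p y^{pj}⟩)) ∪ (⟨x^{pi}y⟩ ∖ ⟨y^p⟩). Then P̂ᵢ is a regular (p⁴, p³−p, 2p²−3p, p²−p)-partial difference set in Ĝ. -/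
open Finset

/-- Number of ways to write `x` as `d₁ * d₂⁻¹` with `d₁, d₂ ∈ D`. -/
def pdsCount {G : Type*} [Group G] [Fintype G] [DecidableEq G] (D : Finset G) (x : G) : ℕ :=
  ((D ×ˢ D).filter (fun p => p.1 * p.2⁻¹ = x)).card

/-- `D` is a regular `(v,k,λ,μ)`-partial difference set in `G`. -/
def IsRegularPDS {G : Type*} [Group G] [Fintype G] [DecidableEq G]
    (D : Finset G) (v k l m : ℤ) : Prop :=
  (Fintype.card G : ℤ) = v ∧ (D.card : ℤ) = k ∧ (1 : G) ∉ D ∧ (∀ d ∈ D, d⁻¹ ∈ D) ∧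
  (∀ x ∈ D, (pdsCount D x : ℤ) = l) ∧
  (∀ x : G, x ≠ 1 → x ∉ D → (pdsCount D x : ℤ) = m)

/-- The cyclic subgroup generated by `g`, as a finset. -/
noncomputable def zpFinset {G : Type*} [Group G] [Fintype G] (g : G) : Finset G :=
  ((Subgroup.zpowers g : Set G)).toFinite.toFinset

/-- `P̂ᵢ = (⋃_{j=0}^{p−1} (⟨xy^{j+pi}⟩ ∖ ⟨x^p y^{pj}⟩)) ∪ (⟨x^{pi}y⟩ ∖ ⟨y^p⟩)`. -/
noncomputable def Phat {G : Type*} [Group G] [Fintype G] [DecidableEq G]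
    (x y : G) (p i : ℕ) : Finset G :=
  ((Finset.range p).biUnion fun j =>
      zpFinset (x * y ^ (j + p * i)) \ zpFinset (x ^ p * y ^ (p * j)))
    ∪ (zpFinset (x ^ (p * i) * y) \ zpFinset (y ^ p))

open Classical in
/-- indicator function of a set -/
noncomputable def ind {G : Type*} (P : G → Prop) (g : G) : ℤ := if P g then 1 else 0

lemma ind_pos {G : Type*} {P : G → Prop} {g : G} (h : P g) : ind P g = 1 := by simp [ind, h]
lemma ind_neg {G : Type*} {P : G → Prop} {g : G} (h : ¬ P g) : ind P g = 0 := by simp [ind, h]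

section abstractPart

variable {G : Type*} [Group G] [Fintype G]

open Classical in
lemma sum_ind (P : G → Prop) : ∑ g, ind P g = ((univ.filter P).card : ℤ) := by
  simp [ind]

lemma sum_ind_zpowers (c : G) : ∑ g, ind (· ∈ Subgroup.zpowers c) g = (orderOf c : ℤ) := by
  classical
  rw [sum_ind, ← Nat.card_zpowers]
  rw [Nat.card_eq_fintype_card, Fintype.card_subtype]

/-- trivial intersection and the right cardinalities: each element has one representation -/
lemma sum_cross (c d : G) (n : ℕ) (hc : orderOf c = n) (hd : orderOf d = n)
    (hG : Fintype.card G = n * n)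
    (hdis : ∀ g, g ∈ Subgroup.zpowers c → g ∈ Subgroup.zpowers d → g = 1) (g : G) :
    ∑ b, ind (· ∈ Subgroup.zpowers c) (g * b) * ind (· ∈ Subgroup.zpowers d) b = 1 := by
  classical
  let f : Subgroup.zpowers c × Subgroup.zpowers d → G := fun q => q.1 * (q.2 : G)⁻¹
  have hinj : Function.Injective f := by
    rintro ⟨⟨a, ha⟩, ⟨b, hb⟩⟩ ⟨⟨a', ha'⟩, ⟨b', hb'⟩⟩ h
    simp only [f] at h
    have e : a'⁻¹ * a = b'⁻¹ * b := by
      have : a = a' * b'⁻¹ * b := by rw [← h]; group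
      rw [this]; group
    have h1 : a'⁻¹ * a = 1 := hdis _ (mul_mem (inv_mem ha') ha) (e ▸ mul_mem (inv_mem hb') hb)
    have h2 : b'⁻¹ * b = 1 := e ▸ h1
    have h3 : a' = a := by rwa [inv_mul_eq_one] at h1
    have h4 : b' = b := by rwa [inv_mul_eq_one] at h2
    subst h3; subst h4; rfl
  have hbij : Function.Bijective f := by
    rw [Fintype.bijective_iff_injective_and_card]
    refine ⟨hinj, ?_⟩
    rw [Fintype.card_prod, ← Nat.card_eq_fintype_card, ← Nat.card_eq_fintype_card,
      Nat.card_zpowers, Nat.card_zpowers, hc, hd, hG]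
  obtain ⟨⟨⟨a, ha⟩, ⟨b, hb⟩⟩, hab⟩ := hbij.2 g
  simp only [f] at hab
  have hgb : g * b = a := by rw [← hab]; group
  rw [Finset.sum_eq_single b]
  · rw [ind_pos, ind_pos]
    · rfl
    · exact hb
    · rw [hgb]; exact ha
  · intro b' _ hne
    by_cases h1 : g * b' ∈ Subgroup.zpowers c
    · by_cases h2 : b' ∈ Subgroup.zpowers d
      · exfalso
        apply hne
        have : f (⟨g * b', h1⟩, ⟨b', h2⟩) = f (⟨a, ha⟩, ⟨b, hb⟩) := by
          simp only [f]; rw [hab]; group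
        have := hinj this
        simp only [Prod.mk.injEq, Subtype.mk.injEq] at this
        exact this.2
      · rw [ind_neg (g := b') h2, mul_zero]
    · rw [ind_neg (g := g * b') h1, zero_mul]
  · simp

lemma sum_self (c : G) (g : G) :
    ∑ b, ind (· ∈ Subgroup.zpowers c) (g * b) * ind (· ∈ Subgroup.zpowers c) b
      = orderOf c * ind (· ∈ Subgroup.zpowers c) g := by
  rw [← sum_ind_zpowers, Finset.sum_mul]
  refine Finset.sum_congr rfl fun b _ => ?_
  by_cases h2 : b ∈ Subgroup.zpowers c
  · by_cases h1 : g ∈ Subgroup.zpowers c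
    · rw [ind_pos (g := g * b) (mul_mem h1 h2), ind_pos (g := b) h2, ind_pos (g := g) h1]
    · rw [ind_neg (g := g * b), ind_neg (g := g) h1]
      · simp
      · rwa [Subgroup.mul_mem_cancel_right _ h2]
  · rw [ind_neg (g := b) h2]; simp

set_option maxHeartbeats 1000000 in
theorem abstract_pds [DecidableEq G] {K : Type*} [Fintype K] (p : ℕ) (hp : p.Prime)
    (hG : Fintype.card G = p ^ 4) (hK : Fintype.card K = p + 1)
    (hmul : ∀ g h : G, (g * h) ^ p = g ^ p * h ^ p) (hpp : ∀ g : G, g ^ (p ^ 2) = 1)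
    (c : K → G) (hc : ∀ k, c k ^ p ≠ 1)
    (hdis : ∀ j k, j ≠ k → ∀ g, g ∈ Subgroup.zpowers (c j ^ p) →
      g ∈ Subgroup.zpowers (c k ^ p) → g = 1)
    (hex : ∀ g : G, g ^ p = 1 → ∃ k, g ∈ Subgroup.zpowers (c k ^ p))
    (D : Finset G) (hD : ∀ g, g ∈ D ↔ g ^ p ≠ 1 ∧ ∃ k, g ∈ Subgroup.zpowers (c k)) :
    IsRegularPDS D ((p : ℤ) ^ 4) ((p : ℤ) ^ 3 - (p : ℤ)) (2 * (p : ℤ) ^ 2 - 3 * (p : ℤ))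
      ((p : ℤ) ^ 2 - (p : ℤ)) := by
  classical
  have : Fact p.Prime := ⟨hp⟩
  have hord : ∀ k, orderOf (c k) = p ^ 2 := fun k =>
    orderOf_eq_prime_pow (n := 1) (by simpa using hc k) (hpp _)
  have hordp : ∀ k, orderOf (c k ^ p) = p := fun k =>
    orderOf_eq_prime (by rw [← pow_mul, ← pow_two]; exact hpp _) (hc k)
  have hinvp : ∀ g : G, (g⁻¹) ^ p = (g ^ p)⁻¹ := fun g => inv_pow g p
  have hsub : ∀ k g, g ∈ Subgroup.zpowers (c k ^ p) → g ∈ Subgroup.zpowers (c k) ∧ g ^ p = 1 := by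
    rintro k g ⟨n, rfl⟩
    refine ⟨zpow_mem (pow_mem (Subgroup.mem_zpowers _) _) _, ?_⟩
    change ((c k ^ p) ^ n) ^ p = 1
    rw [← zpow_natCast, ← zpow_mul, mul_comm, zpow_mul, zpow_natCast, ← pow_mul, ← pow_two, hpp,
      one_zpow]
  have hsub' : ∀ k g, g ∈ Subgroup.zpowers (c k) → g ^ p = 1 → g ∈ Subgroup.zpowers (c k ^ p) := by
    rintro k g ⟨n, rfl⟩ h
    change (c k ^ n) ^ p = 1 at h
    rw [← zpow_natCast, ← zpow_mul, ← orderOf_dvd_iff_zpow_eq_one, hord] at h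
    have h2 : (p : ℤ) ∣ n := by
      have : (p : ℤ) * p ∣ n * p := by simpa [pow_two] using h
      exact Int.dvd_of_mul_dvd_mul_right (by exact_mod_cast hp.ne_zero) this
    obtain ⟨m, rfl⟩ := h2
    refine ⟨m, ?_⟩
    simp only [zpow_mul, zpow_natCast]
  have hpw : ∀ k g, g ∈ Subgroup.zpowers (c k) → g ^ p ∈ Subgroup.zpowers (c k ^ p) := by
    rintro k g ⟨n, rfl⟩
    refine ⟨n, ?_⟩
    change (c k ^ p) ^ n = (c k ^ n) ^ p
    rw [← zpow_natCast, ← zpow_natCast, ← zpow_mul, ← zpow_mul, mul_comm]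
  have hdis' : ∀ j k, j ≠ k → ∀ g, g ∈ Subgroup.zpowers (c j) →
      g ∈ Subgroup.zpowers (c k) → g = 1 := by
    intro j k hjk g h1 h2
    have h3 := hdis j k hjk _ (hpw j g h1) (hpw k g h2)
    exact hdis j k hjk _ (hsub' j g h1 h3) (hsub' k g h2 h3)
  have hgpp : ∀ g : G, (g ^ p) ^ p = 1 := fun g => by rw [← pow_mul, ← pow_two]; exact hpp g
  -- the functions
  set C : K → G → ℤ := fun k => ind (· ∈ Subgroup.zpowers (c k)) with hCdef
  set o : G → ℤ := ind (fun g => g ^ p = 1) with hodef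
  set e : G → ℤ := ind (fun g => g = 1) with hedef
  set s : G → ℤ := fun g => ∑ k, C k g with hsdef
  set d : G → ℤ := ind (· ∈ D) with hddef
  have hs1 : s 1 = p + 1 := by
    have : ∀ k, C k 1 = 1 := fun k => ind_pos (one_mem _)
    simp [hsdef, this, hK]
  have hsk : ∀ g k, g ≠ 1 → g ∈ Subgroup.zpowers (c k) → s g = 1 := by
    intro g k hg hk
    simp only [hsdef]
    rw [Finset.sum_eq_single k]
    · exact ind_pos hk
    · intro j _ hj
      exact ind_neg fun h => hg (hdis' j k hj g h hk)
    · simp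
  have hsO : ∀ g, g ≠ 1 → g ^ p = 1 → s g = 1 := by
    intro g hg h
    obtain ⟨k, hk⟩ := hex g h
    exact hsk g k hg (hsub k g hk).1
  have hd : ∀ g, d g = s g - o g - p * e g := by
    intro g
    by_cases h1 : g = 1
    · subst h1
      have h1 : d 1 = 0 := ind_neg fun h => ((hD 1).1 h).1 (one_pow _)
      have h2 : o 1 = 1 := ind_pos (one_pow _)
      have h3 : e 1 = 1 := ind_pos rfl
      rw [h1, hs1, h2, h3]; ring
    have h3 : e g = 0 := ind_neg h1
    by_cases h2 : g ^ p = 1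
    · have h4 : d g = 0 := ind_neg fun h => ((hD g).1 h).1 h2
      have h5 : o g = 1 := ind_pos h2
      rw [h4, hsO g h1 h2, h5, h3]; ring
    · have h5 : o g = 0 := ind_neg h2
      by_cases h6 : ∃ k, g ∈ Subgroup.zpowers (c k)
      · have h4 : d g = 1 := ind_pos ((hD g).2 ⟨h2, h6⟩)
        obtain ⟨k, hk⟩ := h6
        rw [h4, hsk g k h1 hk, h5, h3]; ring
      · have h4 : d g = 0 := ind_neg fun h => h6 ((hD g).1 h).2
        have h7 : s g = 0 := Finset.sum_eq_zero fun k _ => ind_neg fun h => h6 ⟨k, h⟩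
        rw [h4, h7, h5, h3]; ring
  have hCsum : ∀ k, ∑ g, C k g = (p : ℤ) ^ 2 := fun k => by
    simp only [hCdef]; rw [sum_ind_zpowers, hord]; push_cast; rfl
  have hssum : ∑ g, s g = (p + 1) * (p : ℤ) ^ 2 := by
    simp only [hsdef]; rw [Finset.sum_comm]; simp [hCsum, hK]
  have hesum : ∑ g, e g = 1 := by
    rw [Finset.sum_eq_single (1 : G)]
    · exact ind_pos rfl
    · intro g _ hg
      exact ind_neg hg
    · simp
  have hCo : ∀ k, ∑ g, C k g * o g = p := by
    intro k
    have := sum_ind_zpowers (c k ^ p)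
    rw [hordp k] at this
    rw [← this]
    refine Finset.sum_congr rfl fun g _ => ?_
    by_cases h : g ∈ Subgroup.zpowers (c k ^ p)
    · have h1 : C k g = 1 := ind_pos (hsub k g h).1
      have h2 : o g = 1 := ind_pos (hsub k g h).2
      rw [h1, h2, ind_pos (g := g) h]; rfl
    · rw [ind_neg (g := g) h]
      by_cases h1 : g ∈ Subgroup.zpowers (c k)
      · have h2 : o g = 0 := ind_neg fun h2 => h (hsub' k g h1 h2)
        rw [h2, mul_zero]
      · have h2 : C k g = 0 := ind_neg h1
        rw [h2, zero_mul]
  have hosum : ∑ g, o g = (p : ℤ) ^ 2 := by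
    have h1 : ∑ g, s g * o g = (p + 1) * p := by
      simp only [hsdef, Finset.sum_mul]; rw [Finset.sum_comm]; simp [hCo, hK]
    have h2 : ∀ g, s g * o g = o g + p * e g := by
      intro g
      by_cases h1 : g = 1
      · subst h1
        have h2 : o 1 = 1 := ind_pos (one_pow _)
        have h3 : e 1 = 1 := ind_pos rfl
        rw [hs1, h2, h3]; ring
      have h3 : e g = 0 := ind_neg h1
      by_cases h2 : g ^ p = 1
      · rw [hsO g h1 h2, h3]; ring
      · have h5 : o g = 0 := ind_neg h2
        rw [h5, h3]; ring
    simp only [h2, Finset.sum_add_distrib, ← Finset.mul_sum, hesum] at h1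
    linarith
  -- convolutions
  have hss : ∀ g, ∑ b, s (g * b) * s b = p ^ 2 * s g + p * (p + 1) := by
    intro g
    have h1 : ∀ j k, ∑ b, C j (g * b) * C k b = if j = k then (p : ℤ) ^ 2 * C j g else 1 := by
      intro j k
      by_cases h : j = k
      · subst h
        rw [if_pos rfl]
        simp only [hCdef]
        rw [sum_self, hord]; push_cast; rfl
      · rw [if_neg h]
        exact sum_cross (c j) (c k) (p ^ 2) (hord j) (hord k) (by rw [hG]; ring) (hdis' j k h) g
    have h2 : ∑ b, s (g * b) * s b = ∑ j, ∑ k, ∑ b, C j (g * b) * C k b := by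
      simp only [hsdef, Finset.sum_mul_sum]
      rw [Finset.sum_comm]
      refine Finset.sum_congr rfl fun j _ => ?_
      rw [Finset.sum_comm]
    rw [h2]
    have h3 : ∀ j k, (if j = k then (p : ℤ) ^ 2 * C j g else 1)
        = 1 + if j = k then ((p : ℤ) ^ 2 * C j g - 1) else 0 := by
      intro j k; split_ifs <;> ring
    simp only [h1, h3, Finset.sum_add_distrib, Finset.sum_ite_eq, Finset.mem_univ, if_true,
      Finset.sum_const, Finset.card_univ, hK, Finset.sum_sub_distrib, ← Finset.mul_sum, hsdef]
    simp only [nsmul_eq_mul]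
    push_cast
    ring
  have homul : ∀ a g b : G, a ^ p = 1 → (o (g * (a * b)) = o (g * b)) := by
    intro a g b h
    simp only [hodef, ind, hmul, h, one_mul]
  have hCs : ∀ k g, ∑ b, o (g⁻¹ * b) * C k b = p * C k (g ^ p) := by
    intro k g
    by_cases h : g ^ p ∈ Subgroup.zpowers (c k)
    · have h1 : C k (g ^ p) = 1 := ind_pos h
      rw [h1, mul_one]
      obtain ⟨n, hn⟩ := hsub' k _ h (hgpp g)
      change (c k ^ p) ^ n = g ^ p at hn
      set a := c k ^ n with ha
      have hap : a ^ p = g ^ p := by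
        rw [ha, ← hn, ← zpow_natCast, ← zpow_natCast, ← zpow_mul, ← zpow_mul, mul_comm]
      have hak : a ∈ Subgroup.zpowers (c k) := ⟨n, rfl⟩
      rw [← hCo k, ← Equiv.sum_comp (Equiv.mulLeft a)]
      refine Finset.sum_congr rfl fun b _ => ?_
      rw [mul_comm]
      congr 1
      · simp only [hCdef, ind, Equiv.coe_mulLeft, Subgroup.mul_mem_cancel_left _ hak]
      · simp [hodef, ind, hmul, hap]
    · have h1 : C k (g ^ p) = 0 := ind_neg h
      rw [h1, mul_zero]
      refine Finset.sum_eq_zero fun b _ => ?_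
      by_cases hb : b ∈ Subgroup.zpowers (c k)
      · have h2 : o (g⁻¹ * b) = 0 := ind_neg fun h2 => h (by
          rw [hmul, hinvp, inv_mul_eq_one] at h2
          rw [h2]; exact pow_mem hb _)
        rw [h2, zero_mul]
      · have h2 : C k b = 0 := ind_neg hb
        rw [h2, mul_zero]
  have hoinv : ∀ g, o g⁻¹ = o g := by
    intro g; simp [hodef, ind]
  have hCinv : ∀ k g, C k g⁻¹ = C k g := by
    intro k g; simp only [hCdef, ind, inv_mem_iff]
  have hsinv : ∀ g, s g⁻¹ = s g := by
    intro g; simp only [hsdef, hCinv]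
  have hspow : ∀ g, s (g ^ p) = 1 + p * o g := by
    intro g
    by_cases h : g ^ p = 1
    · have : o g = 1 := ind_pos h
      rw [h, hs1, this]; ring
    · have : o g = 0 := ind_neg h
      rw [hsO _ h (hgpp g), this]; ring
  have hos' : ∀ g, ∑ b, o (g⁻¹ * b) * s b = p * (1 + p * o g) := by
    intro g
    rw [← hspow]
    simp only [hsdef, Finset.mul_sum]
    rw [Finset.sum_comm]
    exact Finset.sum_congr rfl fun k _ => by rw [hCs, ]
  have hos : ∀ g, ∑ b, o (g * b) * s b = p * (1 + p * o g) := by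
    intro g
    have := hos' g⁻¹
    rwa [inv_inv, hoinv] at this
  have hso : ∀ g, ∑ b, s (g * b) * o b = p * (1 + p * o g) := by
    intro g
    rw [← hos' g, ← Equiv.sum_comp (Equiv.mulLeft g) (fun b => o (g⁻¹ * b) * s b)]
    refine Finset.sum_congr rfl fun b _ => ?_
    simp [mul_comm]
  have hoo : ∀ g, ∑ b, o (g * b) * o b = p ^ 2 * o g := by
    intro g
    rw [← hosum, Finset.sum_mul]
    refine Finset.sum_congr rfl fun b _ => ?_
    by_cases h : b ^ p = 1
    · simp [hodef, ind, hmul, h]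
    · have : o b = 0 := ind_neg h
      rw [this]; ring
  have hfe : ∀ (f : G → ℤ) g, ∑ b, f (g * b) * e b = f g := by
    intro f g
    simp [hedef, ind]
  have hef : ∀ (f : G → ℤ) g, ∑ b, e (g * b) * f b = f g⁻¹ := by
    intro f g
    rw [Finset.sum_eq_single g⁻¹]
    · simp [hedef, ind]
    · intro b _ hb
      have : e (g * b) = 0 := ind_neg fun h => hb (eq_inv_of_mul_eq_one_right h)
      rw [this, zero_mul]
    · simp
  have hcount : ∀ g, (pdsCount D g : ℤ) = ∑ b, d (g * b) * d b := by
    intro g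
    have h1 : ∑ b, d (g * b) * d b = ∑ b, ind (fun b => g * b ∈ D ∧ b ∈ D) b := by
      refine Finset.sum_congr rfl fun b _ => ?_
      simp only [hddef, ind]
      by_cases h1 : g * b ∈ D <;> by_cases h2 : b ∈ D <;> simp [h1, h2]
    rw [h1, sum_ind, pdsCount]
    congr 1
    refine Finset.card_bij' (fun q _ => q.2) (fun b _ => (g * b, b)) ?_ ?_ ?_ ?_
    · rintro ⟨a, b⟩ h
      simp only [Finset.mem_filter, Finset.mem_product, Finset.mem_univ, true_and] at h ⊢
      rw [← h.2, inv_mul_cancel_right]; exact h.1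
    · intro b h
      simp only [Finset.mem_filter, Finset.mem_product, Finset.mem_univ, true_and] at h ⊢
      exact ⟨h, by group⟩
    · rintro ⟨a, b⟩ h
      simp only [Finset.mem_filter, Finset.mem_product] at h
      simp only [Prod.mk.injEq, and_true]
      rw [← h.2, inv_mul_cancel_right]
    · intro b _; rfl
  have hmain : ∀ g, g ≠ 1 → (pdsCount D g : ℤ) = (p ^ 2 - 2 * p) * d g + (p ^ 2 - p) := by
    intro g hg
    have heg : e g = 0 := ind_neg hg
    have hexp : ∀ b, d (g * b) * d b = s (g * b) * s b - s (g * b) * o b - o (g * b) * s b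
        + o (g * b) * o b - p * (s (g * b) * e b) - p * (e (g * b) * s b)
        + p * (o (g * b) * e b) + p * (e (g * b) * o b) + p ^ 2 * (e (g * b) * e b) := by
      intro b; rw [hd, hd]; ring
    rw [hcount]
    simp only [hexp, Finset.sum_add_distrib, Finset.sum_sub_distrib, ← Finset.mul_sum, hss, hso,
      hos, hoo, hfe, hef, hsinv, hoinv, heg]
    have := hd g
    rw [heg] at this
    rw [this]; ring
  refine ⟨by rw [hG]; push_cast; rfl, ?_, ?_, ?_, ?_, ?_⟩
  · have h1 : ∑ g, d g = (D.card : ℤ) := by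
      simp only [hddef]; rw [sum_ind]; congr 2; ext; simp
    rw [← h1]
    simp only [hd, Finset.sum_sub_distrib, ← Finset.mul_sum, hssum, hosum, hesum]
    ring
  · intro h; exact ((hD 1).1 h).1 (one_pow _)
  · intro g h
    rw [hD] at h ⊢
    obtain ⟨h1, k, hk⟩ := h
    exact ⟨by rwa [hinvp, Ne, inv_eq_one], k, inv_mem hk⟩
  · intro g h
    have h1 : g ≠ 1 := by rintro rfl; exact ((hD 1).1 h).1 (one_pow _)
    have h2 : d g = 1 := ind_pos h
    rw [hmain g h1, h2]; ring
  · intro g h1 h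
    have h2 : d g = 0 := ind_neg h
    rw [hmain g h1, h2]; ring

end abstractPart

section concretePart

variable {G : Type*} [Group G]

/-- `p`-th power of a product in class two. -/
lemma mul_pow_class_two (g h z : G) (hz : h * g = g * h * z) (hzc : ∀ u, Commute z u) (n : ℕ) :
    (g * h) ^ n = g ^ n * h ^ n * z ^ (n.choose 2) := by
  have hc : ∀ m n : ℕ, ∀ u, Commute (z ^ m) (u ^ n) := fun m n u => ((hzc u).pow_pow m n)
  have h1 : ∀ n : ℕ, h ^ n * g = g * h ^ n * z ^ n := by
    intro n
    induction n with
    | zero => simp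
    | succ n ih =>
      calc h ^ (n+1) * g = h ^ n * (h * g) := by rw [pow_succ]; group
        _ = (h ^ n * g) * h * z := by rw [hz]; group
        _ = g * h ^ n * (z ^ n * h) * z := by rw [ih]; group
        _ = g * h ^ n * (h * z ^ n) * z := by rw [((hzc h).pow_left n).eq]
        _ = g * h ^ (n+1) * z ^ (n+1) := by rw [pow_succ, pow_succ]; simp only [mul_assoc]
  induction n with
  | zero => simp
  | succ n ih =>
    have e1 : (n+1).choose 2 = n + n.choose 2 := by
      rw [Nat.choose_succ_succ' n 1]; simp
    calc (g * h) ^ (n+1) = g ^ n * h ^ n * (z ^ (n.choose 2) * (g * h)) := by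
          rw [pow_succ, ih]; simp only [mul_assoc]
      _ = g ^ n * (h ^ n * g) * h * z ^ (n.choose 2) := by
          rw [((hzc (g*h)).pow_left _).eq]; simp only [mul_assoc]
      _ = g ^ n * g * h ^ n * (z ^ n * h) * z ^ (n.choose 2) := by
          rw [h1]; simp only [mul_assoc]
      _ = g ^ n * g * h ^ n * (h * z ^ n) * z ^ (n.choose 2) := by
          rw [((hzc h).pow_left n).eq]
      _ = _ := by rw [e1, pow_add z, pow_succ g, pow_succ h]; simp only [mul_assoc]

end concretePart

/-- the theorem -/
theorem stmt14 (p : ℕ) (hp : p.Prime) (hodd : Odd p)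
    (G : Type*) [Group G] [Fintype G] [DecidableEq G] (x y : G)
    (hx : x ^ (p ^ 2) = 1) (hy : y ^ (p ^ 2) = 1)
    (hconj : y * x * y⁻¹ = x ^ (p ^ 2 - p + 1))
    (hgen : Subgroup.closure ({x, y} : Set G) = ⊤)
    (hcard : Fintype.card G = p ^ 4)
    (i : ℕ) (hi1 : 1 ≤ i) (hi2 : i ≤ p - 1) :
    IsRegularPDS (Phat x y p i)
      ((p : ℤ) ^ 4) ((p : ℤ) ^ 3 - (p : ℤ)) (2 * (p : ℤ) ^ 2 - 3 * (p : ℤ))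
      ((p : ℤ) ^ 2 - (p : ℤ)) := by
  classical
  have hpZ : Prime (p : ℤ) := Nat.prime_iff_prime_int.1 hp
  have hp0 : (p : ℤ) ≠ 0 := hpZ.ne_zero
  set z : G := x ^ (-(p : ℤ)) with hz
  have hyx : y * x = x * z * y := by
    have h1 : x ^ (p ^ 2 - p + 1) = x * z := by
      have h2 : p ≤ p ^ 2 := Nat.le_self_pow (by norm_num) p
      rw [hz, ← zpow_natCast, ← zpow_one_add]
      push_cast [Nat.cast_sub h2]
      have : (p : ℤ) ^ 2 - p + 1 = (p ^ 2 : ℕ) + (1 + -(p : ℤ)) := by push_cast; ring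
      rw [this, zpow_add, zpow_natCast, hx, one_mul]
    rw [← h1, ← hconj, inv_mul_cancel_right]
  have hzp : z ^ p = 1 := by
    rw [hz, ← zpow_natCast, ← zpow_mul]
    have : -(p : ℤ) * p = -((p ^ 2 : ℕ) : ℤ) := by push_cast; ring
    rw [this, zpow_neg, zpow_natCast, hx, inv_one]
  have hxz : Commute x z := (Commute.refl x).zpow_right _
  have hzy : Commute z y := by
    have h1 : y * x * y⁻¹ = x * z := by rw [hyx]; group
    have h2 : y * z * y⁻¹ = z := by
      have : y * z * y⁻¹ = (y * x * y⁻¹) ^ (-(p : ℤ)) := by rw [conj_zpow]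
      rw [this, h1, hxz.mul_zpow, ← hz, zpow_neg, zpow_natCast, hzp, inv_one, mul_one]
    have h3 : y * z = z * y := by
      conv_rhs => rw [← h2]
      group
    exact h3.symm
  have hzc : ∀ u, Commute z u := by
    intro u
    have hu : u ∈ Subgroup.closure ({x, y} : Set G) := by rw [hgen]; trivial
    induction hu using Subgroup.closure_induction with
    | mem a ha =>
      rcases ha with rfl | ha
      · exact hxz.symm
      · rw [Set.mem_singleton_iff] at ha; subst ha; exact hzy
    | one => exact Commute.one_right _
    | mul a b _ _ h1 h2 => exact h1.mul_right h2
    | inv a _ h => exact h.inv_right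
  have hyxz : ∀ b a : ℤ, y ^ b * x ^ a = x ^ a * y ^ b * z ^ (a * b) := by
    intro b a
    have h1 : x⁻¹ * y * x = z * y := by rw [mul_assoc, hyx]; group
    have h2 : x⁻¹ * y ^ b * x = z ^ b * y ^ b := by
      have := conj_zpow (a := x⁻¹) (b := y) (i := b)
      rw [inv_inv] at this
      rw [← this, h1, (hzc y).mul_zpow]
    have h3 : y ^ b * x * (y ^ b)⁻¹ = x * z ^ b := by
      have : y ^ b * x = x * (z ^ b * y ^ b) := by rw [← h2]; group
      rw [this]; group
    have h4 : y ^ b * x ^ a * (y ^ b)⁻¹ = x ^ a * z ^ (b * a) := by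
      rw [← conj_zpow, h3, (hxz.zpow_right b).mul_zpow, ← zpow_mul]
    have h5 : y ^ b * x ^ a = x ^ a * z ^ (b * a) * y ^ b := by rw [← h4]; group
    rw [h5, mul_assoc, mul_assoc, ((hzc (y ^ b)).zpow_left _).eq, mul_comm b a]
  have hzx : ∀ n : ℤ, z ^ n = x ^ (-(p : ℤ) * n) := fun n => by rw [hz, ← zpow_mul]
  -- product formula
  have hprod : ∀ a b a' b' : ℤ, (x ^ a * y ^ b) * (x ^ a' * y ^ b')
      = x ^ (a + a') * y ^ (b + b') * z ^ (a' * b) := by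
    intro a b a' b'
    calc (x ^ a * y ^ b) * (x ^ a' * y ^ b') = x ^ a * (y ^ b * x ^ a') * y ^ b' := by
          simp only [mul_assoc]
      _ = x ^ a * x ^ a' * y ^ b * (z ^ (a' * b) * y ^ b') := by rw [hyxz]; simp only [mul_assoc]
      _ = _ := by
          rw [((hzc (y ^ b')).zpow_left _).eq, zpow_add, zpow_add]; simp only [mul_assoc]
  have hnf : ∀ g : G, ∃ a b : ℤ, g = x ^ a * y ^ b := by
    have hmulz : ∀ a b n : ℤ, x ^ a * y ^ b * z ^ n = x ^ (a + -(p : ℤ) * n) * y ^ b := by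
      intro a b n
      rw [mul_assoc, ← ((hzc (y ^ b)).zpow_left n).eq, zpow_add, hzx, mul_assoc]
    intro g
    have hu : g ∈ Subgroup.closure ({x, y} : Set G) := by rw [hgen]; trivial
    induction hu using Subgroup.closure_induction with
    | mem a ha =>
      rcases ha with rfl | ha
      · exact ⟨1, 0, by simp⟩
      · rw [Set.mem_singleton_iff] at ha; subst ha; exact ⟨0, 1, by simp⟩
    | one => exact ⟨0, 0, by simp⟩
    | mul g h _ _ h1 h2 =>
      obtain ⟨a, b, rfl⟩ := h1
      obtain ⟨a', b', rfl⟩ := h2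
      rw [hprod, hmulz]
      exact ⟨_, _, rfl⟩
    | inv g _ h =>
      obtain ⟨a, b, rfl⟩ := h
      rw [mul_inv_rev, ← zpow_neg, ← zpow_neg, hyxz, hmulz]
      exact ⟨_, _, rfl⟩
  -- orders
  have hind : ∀ a b : ℤ, x ^ a * y ^ b = 1 → ((p : ℤ) ^ 2 ∣ a ∧ (p : ℤ) ^ 2 ∣ b) := by
    let f : Subgroup.zpowers x × Subgroup.zpowers y → G := fun q => q.1 * (q.2 : G)
    have hsurj : Function.Surjective f := by
      intro g
      obtain ⟨a, b, rfl⟩ := hnf g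
      exact ⟨(⟨x ^ a, a, rfl⟩, ⟨y ^ b, b, rfl⟩), rfl⟩
    have hox : orderOf x ≤ p ^ 2 := orderOf_le_of_pow_eq_one (pow_pos hp.pos _) hx
    have hoy : orderOf y ≤ p ^ 2 := orderOf_le_of_pow_eq_one (pow_pos hp.pos _) hy
    have hc1 : Fintype.card (Subgroup.zpowers x × Subgroup.zpowers y) = orderOf x * orderOf y := by
      rw [Fintype.card_prod, ← Nat.card_eq_fintype_card, ← Nat.card_eq_fintype_card,
        Nat.card_zpowers, Nat.card_zpowers]
    have hle := Fintype.card_le_of_surjective f hsurj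
    rw [hc1, hcard] at hle
    have hpos : 0 < p ^ 2 := pow_pos hp.pos _
    have hox' : orderOf x = p ^ 2 := by
      by_contra h
      have h1 : orderOf x < p ^ 2 := lt_of_le_of_ne hox h
      have : p ^ 4 = p ^ 2 * p ^ 2 := by ring
      nlinarith
    have hoy' : orderOf y = p ^ 2 := by
      by_contra h
      have h1 : orderOf y < p ^ 2 := lt_of_le_of_ne hoy h
      have : p ^ 4 = p ^ 2 * p ^ 2 := by ring
      nlinarith
    have hbij : Function.Bijective f := by
      rw [Fintype.bijective_iff_surjective_and_card]
      refine ⟨hsurj, ?_⟩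
      rw [hc1, hcard, hox', hoy']; ring
    intro a b h
    have h1 : f (⟨x ^ a, a, rfl⟩, ⟨y ^ b, b, rfl⟩) = f (1, 1) := by
      simp only [f]; rw [h]; simp
    have h2 := hbij.1 h1
    simp only [Prod.mk.injEq, Subtype.ext_iff, Subgroup.coe_one] at h2
    obtain ⟨h2, h3⟩ := h2
    rw [← orderOf_dvd_iff_zpow_eq_one] at h2 h3
    rw [hox'] at h2; rw [hoy'] at h3
    exact ⟨by exact_mod_cast h2, by exact_mod_cast h3⟩
  have hmulp : ∀ g h : G, (g * h) ^ p = g ^ p * h ^ p := by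
    intro g h
    obtain ⟨a, b, rfl⟩ := hnf g
    obtain ⟨a', b', rfl⟩ := hnf h
    have hcm : (x ^ a' * y ^ b') * (x ^ a * y ^ b)
        = (x ^ a * y ^ b) * (x ^ a' * y ^ b') * z ^ (a * b' - a' * b) := by
      rw [hprod, hprod, mul_assoc _ (z ^ _) (z ^ _), ← zpow_add, add_comm a' a, add_comm b' b]
      congr 2; ring
    rw [mul_pow_class_two _ _ _ hcm (fun u => (hzc u).zpow_left _)]
    have h2 : p ∣ p.choose 2 := by
      refine hp.dvd_choose_self (by norm_num) ?_
      have := hp.two_le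
      rcases hodd with ⟨m, hm⟩
      omega
    obtain ⟨m, hm⟩ := h2
    rw [hm, pow_mul, ← zpow_natCast (z ^ _) p, ← zpow_mul, mul_comm _ (p : ℤ), zpow_mul,
      zpow_natCast, hzp]
    simp
  have hpow : ∀ a b : ℤ, (x ^ a * y ^ b) ^ p = x ^ ((p : ℤ) * a) * y ^ ((p : ℤ) * b) := by
    intro a b
    rw [hmulp, ← zpow_natCast, ← zpow_natCast, ← zpow_mul, ← zpow_mul, mul_comm a, mul_comm b]
  have hx2 : ∀ n : ℤ, x ^ ((p : ℤ) ^ 2 * n) = 1 := by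
    intro n; rw [zpow_mul]; rw [show ((p : ℤ) ^ 2) = ((p ^ 2 : ℕ) : ℤ) by push_cast; rfl,
      zpow_natCast, hx, one_zpow]
  have hy2 : ∀ n : ℤ, y ^ ((p : ℤ) ^ 2 * n) = 1 := by
    intro n; rw [zpow_mul]; rw [show ((p : ℤ) ^ 2) = ((p ^ 2 : ℕ) : ℤ) by push_cast; rfl,
      zpow_natCast, hy, one_zpow]
  have hpp : ∀ g : G, g ^ (p ^ 2) = 1 := by
    intro g
    obtain ⟨a, b, rfl⟩ := hnf g
    rw [pow_two, pow_mul, hpow, hpow, ← mul_assoc, ← mul_assoc, ← pow_two, hx2, hy2, mul_one]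
  -- the Frattini part
  have hxp : ∀ n : ℤ, ∀ u, Commute (x ^ ((p : ℤ) * n)) u := by
    intro n u
    have : x ^ ((p : ℤ) * n) = z ^ (-n) := by rw [hzx]; congr 1; ring
    rw [this]; exact (hzc u).zpow_left _
  -- `W u v = x^{pu} y^{pv}`
  have hW : ∀ u v n : ℤ, (x ^ ((p : ℤ) * u) * y ^ ((p : ℤ) * v)) ^ n
      = x ^ ((p : ℤ) * (u * n)) * y ^ ((p : ℤ) * (v * n)) := by
    intro u v n
    rw [(hxp u _).mul_zpow, ← zpow_mul, ← zpow_mul, mul_assoc, mul_assoc]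
  have hWeq : ∀ u v u' v' : ℤ, x ^ ((p : ℤ) * u) * y ^ ((p : ℤ) * v)
      = x ^ ((p : ℤ) * u') * y ^ ((p : ℤ) * v') ↔ (p : ℤ) ∣ u - u' ∧ (p : ℤ) ∣ v - v' := by
    intro u v u' v'
    have key : x ^ ((p : ℤ) * u) * y ^ ((p : ℤ) * v)
      = x ^ ((p : ℤ) * u') * y ^ ((p : ℤ) * v') ↔
        x ^ ((p : ℤ) * (u - u')) * y ^ ((p : ℤ) * (v - v')) = 1 := by
      rw [mul_sub, mul_sub, zpow_sub, zpow_sub]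
      rw [((hxp u' (x ^ ((p : ℤ) * u))).inv_left).eq.symm]
      rw [← mul_assoc, mul_inv_eq_one, mul_assoc, inv_mul_eq_iff_eq_mul]
    rw [key]
    constructor
    · intro h
      obtain ⟨h1, h2⟩ := hind _ _ h
      rw [pow_two] at h1 h2
      exact ⟨Int.dvd_of_mul_dvd_mul_left hp0 h1, Int.dvd_of_mul_dvd_mul_left hp0 h2⟩
    · rintro ⟨⟨m, hm⟩, ⟨n, hn⟩⟩
      rw [hm, hn, ← mul_assoc, ← mul_assoc, ← pow_two, hx2, hy2, mul_one]
  -- directions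
  let U : Option (Fin p) → ℤ := fun k => k.elim 0 (fun _ => 1)
  let V : Option (Fin p) → ℤ := fun k => k.elim 1 (fun j => (j : ℕ))
  let c : Option (Fin p) → G := fun k => k.elim (x ^ (p * i) * y) (fun j => x * y ^ ((j : ℕ) + p * i))
  have hcp : ∀ k, c k ^ p = x ^ ((p : ℤ) * U k) * y ^ ((p : ℤ) * V k) := by
    intro k
    cases k with
    | none =>
      have h1 : c none = x ^ ((p : ℤ) * i) * y ^ (1 : ℤ) := by
        simp only [c, Option.elim]; rw [zpow_one, ← zpow_natCast]; push_cast; rfl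
      rw [h1, hpow, hWeq]
      simp [U, V]
    | some j =>
      have h1 : c (some j) = x ^ (1 : ℤ) * y ^ (((j : ℕ) : ℤ) + p * i) := by
        simp only [c, Option.elim]; rw [zpow_one, ← zpow_natCast]; push_cast; rfl
      rw [h1, hpow, hWeq]
      simp [U, V]
  have hUV : ∀ k, ¬ ((p : ℤ) ∣ U k ∧ (p : ℤ) ∣ V k) := by
    intro k ⟨h1, h2⟩
    cases k with
    | none => exact hpZ.not_dvd_one h2
    | some j => exact hpZ.not_dvd_one h1
  have hdet : ∀ j k, (p : ℤ) ∣ U j * V k - U k * V j → j = k := by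
    intro j k h
    cases j with
    | none =>
      cases k with
      | none => rfl
      | some k =>
        exfalso; simp [U, V] at h; exact hpZ.not_dvd_one (by simpa using h)
    | some j =>
      cases k with
      | none => exfalso; simp [U, V] at h; exact hpZ.not_dvd_one (by simpa using h)
      | some k =>
        simp only [U, V, Option.elim, one_mul] at h
        congr 1
        apply Fin.ext
        have := Int.eq_zero_of_abs_lt_dvd h (by
          rw [abs_lt]; have := j.2; have := k.2; constructor <;> omega)
        omega
  have hW1 : ∀ u v : ℤ, x ^ ((p : ℤ) * u) * y ^ ((p : ℤ) * v) = 1 ↔ (p : ℤ) ∣ u ∧ (p : ℤ) ∣ v := by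
    intro u v
    have := hWeq u v 0 0
    simpa using this
  have hc1 : ∀ k, c k ^ p ≠ 1 := by
    intro k h
    rw [hcp, hW1] at h
    exact hUV k h
  have hdis : ∀ j k, j ≠ k → ∀ g, g ∈ Subgroup.zpowers (c j ^ p) →
      g ∈ Subgroup.zpowers (c k ^ p) → g = 1 := by
    rintro j k hjk g ⟨m, rfl⟩ ⟨n, hn⟩
    change (c k ^ p) ^ n = (c j ^ p) ^ m at hn
    change (c j ^ p) ^ m = 1
    rw [hcp, hcp, hW, hW, hWeq] at hn
    rw [hcp, hW, hW1]
    obtain ⟨h1, h2⟩ := hn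
    have h3 : (p : ℤ) ∣ m * (U j * V k - U k * V j) := by
      have := dvd_sub (h2.mul_left (U k)) (h1.mul_left (V k))
      have e1 : m * (U j * V k - U k * V j) = U k * (V k * n - V j * m) - V k * (U k * n - U j * m) := by ring
      rw [e1]; exact this
    rcases hpZ.dvd_or_dvd h3 with h | h
    · exact ⟨h.mul_left _, h.mul_left _⟩
    · exact absurd (hdet j k h) hjk
  have hex : ∀ g : G, g ^ p = 1 → ∃ k, g ∈ Subgroup.zpowers (c k ^ p) := by
    intro g hg
    obtain ⟨a, b, rfl⟩ := hnf g
    rw [hpow, hW1] at hg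
    obtain ⟨⟨a, rfl⟩, ⟨b, rfl⟩⟩ := hg
    by_cases ha : (p : ℤ) ∣ a
    · refine ⟨none, b, ?_⟩
      change (c none ^ p) ^ b = _
      rw [hcp, hW, hWeq]
      simpa [U, V] using ha
    · have hcop : IsCoprime (p : ℤ) a := (hpZ.coprime_iff_not_dvd).2 ha
      obtain ⟨r, t, hrt⟩ := hcop
      have hpos : (0 : ℤ) < p := by exact_mod_cast hp.pos
      have hm0 := Int.emod_nonneg (t * b) hp0
      have hm1 := Int.emod_lt_of_pos (t * b) hpos
      refine ⟨some ⟨((t * b) % p).toNat, by omega⟩, a, ?_⟩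
      change (c _ ^ p) ^ a = _
      rw [hcp, hW, hWeq]
      refine ⟨by simp [U], ?_⟩
      simp only [V, Option.elim, Int.toNat_of_nonneg hm0]
      have hdm := Int.emod_add_mul_ediv (t * b) p
      have : (t * b) % p = t * b - p * (t * b / p) := by linarith
      rw [this]
      refine ⟨-(r * b) - (t * b / p) * a, ?_⟩
      linear_combination b * hrt
  refine abstract_pds p hp hcard (K := Option (Fin p)) (by simp) hmulp hpp c hc1 hdis hex _ ?_
  have hgp : ∀ k g, g ∈ Subgroup.zpowers (c k) → (g ∈ Subgroup.zpowers (c k ^ p) ↔ g ^ p = 1) := by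
    rintro k g ⟨n, rfl⟩
    change (c k ^ n) ∈ _ ↔ (c k ^ n) ^ p = 1
    have e1 : (c k ^ n) ^ p = (c k ^ p) ^ n := by
      rw [← zpow_natCast, ← zpow_natCast, ← zpow_mul, ← zpow_mul, mul_comm]
    constructor
    · rintro ⟨m, hm⟩
      change (c k ^ p) ^ m = _ at hm
      rw [← hm, ← zpow_natCast, ← zpow_mul, mul_comm, zpow_mul, zpow_natCast, ← pow_mul,
        ← pow_two, hpp, one_zpow]
    · intro h
      rw [e1, hcp, hW, hW1] at h
      have h2 : (p : ℤ) ∣ n := by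
        by_contra hn
        exact hUV k ⟨(hpZ.dvd_or_dvd h.1).resolve_right hn, (hpZ.dvd_or_dvd h.2).resolve_right hn⟩
      obtain ⟨m, rfl⟩ := h2
      exact ⟨m, by simp only [zpow_mul, zpow_natCast]⟩
  have hw : ∀ j : Fin p, x ^ p * y ^ (p * (j : ℕ)) = c (some j) ^ p := by
    intro j; rw [hcp]; simp only [U, V, Option.elim, mul_one]
    rw [zpow_natCast, ← zpow_natCast y]; push_cast; rfl
  have hw' : y ^ p = c none ^ p := by
    rw [hcp]; simp [U, V]
  intro g
  have hz1 : ∀ a g : G, g ∈ zpFinset a ↔ g ∈ Subgroup.zpowers a := by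
    intro a g; simp [zpFinset]
  simp only [Phat, Finset.mem_union, Finset.mem_biUnion, Finset.mem_sdiff, hz1, Finset.mem_range]
  constructor
  · rintro (⟨j, hj, h1, h2⟩ | ⟨h1, h2⟩)
    · have := hw ⟨j, hj⟩
      simp only at this
      rw [this] at h2
      exact ⟨fun h => h2 ((hgp (some ⟨j, hj⟩) g h1).2 h), some ⟨j, hj⟩, h1⟩
    · rw [hw'] at h2
      exact ⟨fun h => h2 ((hgp none g h1).2 h), none, h1⟩
  · rintro ⟨h1, k, hk⟩
    cases k with
    | none => right; exact ⟨hk, by rw [hw']; exact fun h => h1 ((hgp none g hk).1 h)⟩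
    | some j =>
      left
      exact ⟨j, j.2, hk, by rw [hw]; exact fun h => h1 ((hgp (some j) g hk).1 h)⟩
end
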